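/- The positive Munchausen numbers in base 6 are exactly 1, 3164 and 3416; that is, for n ≥ 1, n = P_6(n) if and only if n ∈ {1, 3164, 3416}. -/

import Mathlib

/-- Digit power sum: `P b n = Σ cᵢ^cᵢ` over the base-`b` digits of `n`, with `0^0 = 1`. -/
def P (b n : ℕ) : ℕ := ((Nat.digits b n).map (fun c => c ^ c)).sum

/-!
In base `b`, a number with `k + 1` digits is at least `b ^ k`, while its digit power sum is at most
`(k + 1) * (b - 1) ^ (b - 1)`, which is smaller than `b ^ k` once `k ≥ b`. So a Munchausen number
has at most `b` digits. As `P b n` depends only on how often each digit occurs in `n`, one need not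
run through all `b ^ b` candidates: each digit count with total at most `b` determines a single
candidate, which is Munchausen precisely when it has these digit counts. In base 6 there are only
924 cases.
-/

theorem P_le_length_digits_mul {b : ℕ} (hb : 1 < b) (n : ℕ) :
    P b n ≤ (Nat.digits b n).length * (b - 1) ^ (b - 1) := by
  have pow_self_le : ∀ x ∈ (Nat.digits b n).map (fun c => c ^ c), x ≤ (b - 1) ^ (b - 1) :=
    List.forall_mem_map.2 fun c hc =>
      Nat.pow_self_mono (Nat.le_sub_one_of_lt (Nat.digits_lt_base hb hc))
  simpa [P] using List.sum_le_card_nsmul _ _ pow_self_le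

theorem succ_mul_pow_self_lt_succ_pow {c k : ℕ} (hc : 1 ≤ c) (hk : c + 1 ≤ k) :
    (k + 1) * c ^ c < (c + 1) ^ k := by
  induction k, hk using Nat.le_induction with
  | base =>
    obtain ⟨d, rfl⟩ := Nat.exists_eq_add_of_le' hc
    calc (d + 1 + 1 + 1) * (d + 1) ^ (d + 1)
        = (d + 3) * (d + 1) * (d + 1) ^ d := by ring
      _ < (d + 2) ^ 2 * (d + 1) ^ d := by gcongr; linarith
      _ ≤ (d + 2) ^ 2 * (d + 2) ^ d := by gcongr; omega
      _ = (d + 1 + 1) ^ (d + 1 + 1) := by ring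
  | succ k _ ih =>
    calc (k + 1 + 1) * c ^ c
        ≤ (c + 1) * (k + 1) * c ^ c := by gcongr; nlinarith
      _ = (c + 1) * ((k + 1) * c ^ c) := mul_assoc ..
      _ < (c + 1) * (c + 1) ^ k := by gcongr
      _ = (c + 1) ^ (k + 1) := (pow_succ' ..).symm

theorem P_lt_self_of_pow_self_le {b n : ℕ} (hb : 1 < b) (hn : b ^ b ≤ n) : P b n < n := by
  have b_lt_length : b < (Nat.digits b n).length := (Nat.lt_digits_length_iff hb n).2 hn
  obtain ⟨c, rfl⟩ := Nat.exists_eq_add_of_le' hb.le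
  obtain ⟨k, length_eq⟩ := Nat.exists_eq_add_of_le' (Nat.one_le_of_lt b_lt_length)
  calc P (c + 1) n
      ≤ (k + 1) * c ^ c := length_eq ▸ P_le_length_digits_mul hb n
    _ < (c + 1) ^ k := succ_mul_pow_self_lt_succ_pow (by omega) (by omega)
    _ ≤ n := (Nat.lt_digits_length_iff hb n).1 (by omega)

/-- The number of occurrences of each `c < b` among the base-`b` digits of `n`; leading zeros are
not counted. -/
def digitCount (b n : ℕ) : Fin b → ℕ := fun c => (Nat.digits b n).count (c : ℕ)

/-- The common value of `P b` on the numbers in which each digit `c` occurs `x c` times. -/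
def selfPowSum {b : ℕ} (x : Fin b → ℕ) : ℕ := ∑ c, x c * (c : ℕ) ^ (c : ℕ)

theorem sum_digitCount_mul {b : ℕ} (hb : 1 < b) (n : ℕ) (f : ℕ → ℕ) :
    ∑ c, digitCount b n c * f c = ((Nat.digits b n).map f).sum := by
  have toFinset_subset : (Nat.digits b n).toFinset ⊆ Finset.range b := fun c hc =>
    Finset.mem_range.2 (Nat.digits_lt_base hb (List.mem_toFinset.1 hc))
  calc ∑ c, digitCount b n c * f c
      = ∑ c ∈ Finset.range b, (Nat.digits b n).count c * f c :=
        Fin.sum_univ_eq_sum_range (fun c => (Nat.digits b n).count c * f c) b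
    _ = ∑ c ∈ (Nat.digits b n).toFinset, (Nat.digits b n).count c * f c :=
        (Finset.sum_subset toFinset_subset fun c _ hc => by
          rw [List.count_eq_zero_of_not_mem (mt List.mem_toFinset.2 hc), zero_mul]).symm
    _ = ((Nat.digits b n).map f).sum := (Finset.sum_list_map_count ..).symm

theorem sum_digitCount {b : ℕ} (hb : 1 < b) (n : ℕ) :
    ∑ c, digitCount b n c = (Nat.digits b n).length := by
  simpa using sum_digitCount_mul hb n fun _ => 1

theorem selfPowSum_digitCount {b : ℕ} (hb : 1 < b) (n : ℕ) :
    selfPowSum (digitCount b n) = P b n :=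
  sum_digitCount_mul hb n fun c => c ^ c

theorem selfPowSum_mem_of_digitCount_six_eq :
    ∀ k ≤ 6, ∀ x ∈ Finset.Nat.antidiagonalTuple 6 k, digitCount 6 (selfPowSum x) = x →
      selfPowSum x ∈ ({0, 1, 3164, 3416} : Finset ℕ) := by
  decide +kernel

theorem munchausen_base6 (n : ℕ) (hn : 1 ≤ n) :
    n = P 6 n ↔ n ∈ ({1, 3164, 3416} : Set ℕ) := by
  have one_lt_six : 1 < 6 := by norm_num
  constructor
  · intro h
    have n_lt : n < 6 ^ 6 := not_le.1 fun hle => (P_lt_self_of_pow_self_le one_lt_six hle).ne' h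
    have sum_le : ∑ c, digitCount 6 n c ≤ 6 :=
      (sum_digitCount one_lt_six n).trans_le ((Nat.digits_length_le_iff one_lt_six n).2 n_lt)
    have selfPowSum_eq : selfPowSum (digitCount 6 n) = n :=
      (selfPowSum_digitCount one_lt_six n).trans h.symm
    have n_mem := selfPowSum_mem_of_digitCount_six_eq _ sum_le (digitCount 6 n)
      (Finset.Nat.mem_antidiagonalTuple.2 rfl) (by rw [selfPowSum_eq])
    simpa [selfPowSum_eq, Nat.one_le_iff_ne_zero.1 hn] using n_mem
  · rintro (rfl | rfl | rfl) <;> norm_num [P]
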